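/- arXiv:1507.02858 — 2 statements merged into one kernel-verified Lean document; each statement's English description precedes it below -/
import Mathlib

section
/- Let n ≥ 1 and let H : ℝ → ℂ^{2n×2n} be continuous with H(t)ᵀ = H(t) for all t. Let S : ℝ → ℂ^{2n×2n} be differentiable with S'(t) = Ω·H(t)·S(t) and S(0) = I_{2n}. Let Z₀ ∈ ℂ^{2n×n} be a normalised Lagrangian frame (Z₀ᵀΩZ₀ = 0, Z₀*ΩZ₀ = 2i·Iₙ), and let N : ℝ → ℂ^{n×n} be differentiable with each N(t) invertible, such that Z(t) := S(t)·Z₀·N(t) satisfies Z(t)*ΩZ(t) = 2i·Iₙ for every t. Define G(t) := Ωᵀ·Re(Z(t)Z(t)*)·Ω and J(t) := −Ω·G(t). Then for every t: G'(t) = Re H(t)·Ω·G(t) − G(t)·Ω·Re H(t) − Im H(t) − G(t)·Ω·Im H(t)·Ω·G(t), and J'(t) = Ω·Re H(t)·J(t) − J(t)·Ω·Re H(t) + Ω·Im H(t) + J(t)·Ω·Im H(t)·J(t). -/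
open Matrix

noncomputable section

/-- The standard symplectic matrix `Ω = [[0, -Iₙ], [Iₙ, 0]]` over `ℝ`. -/
def Omr (n : ℕ) : Matrix (Fin n ⊕ Fin n) (Fin n ⊕ Fin n) ℝ :=
  Matrix.fromBlocks 0 (-1) 1 0

/-- The standard symplectic matrix `Ω = [[0, -Iₙ], [Iₙ, 0]]` over `ℂ`. -/
def Omc (n : ℕ) : Matrix (Fin n ⊕ Fin n) (Fin n ⊕ Fin n) ℂ :=
  Matrix.fromBlocks 0 (-1) 1 0

/-- Entrywise real part of a complex matrix. -/
def reMat {m k : Type*} (M : Matrix m k ℂ) : Matrix m k ℝ :=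
  Matrix.of fun i j => (M i j).re

/-- Entrywise imaginary part of a complex matrix. -/
def imMat {m k : Type*} (M : Matrix m k ℂ) : Matrix m k ℝ :=
  Matrix.of fun i j => (M i j).im

/-- The symplectic metric `G = Ωᵀ Re(W W*) Ω` of the Lagrangian frame `W`. -/
def symplMetric (n : ℕ) (W : Matrix (Fin n ⊕ Fin n) (Fin n) ℂ) :
    Matrix (Fin n ⊕ Fin n) (Fin n ⊕ Fin n) ℝ :=
  (Omr n)ᵀ * reMat (W * Wᴴ) * Omr n


def HD {m k : Type*} {E : Type*} [NormedAddCommGroup E] [NormedSpace ℝ E]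
    (M : ℝ → Matrix m k E) (M' : Matrix m k E) (t : ℝ) : Prop :=
  ∀ i j, HasDerivAt (fun s => M s i j) (M' i j) t

theorem HD.mul {m k l : Type*} [Fintype k] {E : Type*} [NormedCommRing E] [NormedAlgebra ℝ E]
    {A : ℝ → Matrix m k E} {B : ℝ → Matrix k l E} {A' : Matrix m k E} {B' : Matrix k l E} {t : ℝ}
    (hA : HD A A' t) (hB : HD B B' t) : HD (fun s => A s * B s) (A' * B t + A t * B') t := by
  intro i j
  have := HasDerivAt.fun_sum (u := Finset.univ) (fun x _ => (hA i x).fun_mul (hB x j))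
  simpa [Matrix.mul_apply, Finset.sum_add_distrib] using this

theorem HD.const {m k : Type*} {E : Type*} [NormedAddCommGroup E] [NormedSpace ℝ E]
    (M : Matrix m k E) (t : ℝ) : HD (fun _ => M) 0 t := fun i j => by
  simpa using hasDerivAt_const t (M i j)

theorem HD.transpose {m k : Type*} {E : Type*} [NormedAddCommGroup E] [NormedSpace ℝ E]
    {M : ℝ → Matrix m k E} {M' : Matrix m k E} {t : ℝ} (h : HD M M' t) :
    HD (fun s => (M s)ᵀ) M'ᵀ t := fun i j => h j i

theorem HD.conjTranspose {m k : Type*} 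
    {M : ℝ → Matrix m k ℂ} {M' : Matrix m k ℂ} {t : ℝ} (h : HD M M' t) :
    HD (fun s => (M s)ᴴ) M'ᴴ t := fun i j => (h j i).star

theorem HD.re {m k : Type*} 
    {M : ℝ → Matrix m k ℂ} {M' : Matrix m k ℂ} {t : ℝ} (h : HD M M' t) :
    HD (fun s => reMat (M s)) (reMat M') t := fun i j => 
  (Complex.reCLM.hasFDerivAt.comp_hasDerivAt t (h i j))

theorem HD.unique {m k : Type*} {E : Type*} [NormedAddCommGroup E] [NormedSpace ℝ E]
    {M : ℝ → Matrix m k E} {M' M'' : Matrix m k E} {t : ℝ} (h : HD M M' t) (h2 : HD M M'' t) :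
    M' = M'' := by
  ext i j
  exact (h i j).unique (h2 i j)

theorem HD.congr {m k : Type*} {E : Type*} [NormedAddCommGroup E] [NormedSpace ℝ E]
    {M : ℝ → Matrix m k E} {M' M'' : Matrix m k E} {t : ℝ} (h : HD M M' t) (h2 : M'' = M') :
    HD M M'' t := h2 ▸ h

theorem reMat_mul {m k l : Type*} [Fintype k] (A : Matrix m k ℂ) (B : Matrix k l ℂ) :
    reMat (A * B) = reMat A * reMat B - imMat A * imMat B := by
  ext i j
  simp [reMat, imMat, Matrix.mul_apply]

theorem imMat_mul {m k l : Type*} [Fintype k] (A : Matrix m k ℂ) (B : Matrix k l ℂ) :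
    imMat (A * B) = reMat A * imMat B + imMat A * reMat B := by
  ext i j
  simp [reMat, imMat, Matrix.mul_apply, Finset.sum_add_distrib]

theorem reMat_add {m k : Type*} (A B : Matrix m k ℂ) :
    reMat (A + B) = reMat A + reMat B := by
  ext i j; simp [reMat]

theorem reMat_sub {m k : Type*} (A B : Matrix m k ℂ) :
    reMat (A - B) = reMat A - reMat B := by
  ext i j; simp [reMat]

theorem reMat_Om (n : ℕ) : reMat (Omc n) = Omr n := by
  ext i j
  rcases i with i | i <;> rcases j with j | j <;> simp [reMat, Omc, Omr, Matrix.one_apply] <;>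
    split_ifs <;> simp

theorem imMat_Om (n : ℕ) : imMat (Omc n) = 0 := by
  ext i j
  rcases i with i | i <;> rcases j with j | j <;> simp [imMat, Omc, Matrix.one_apply] <;>
    split_ifs <;> simp

theorem Omc_sq (n : ℕ) : Omc n * Omc n = -1 := by
  simp [Omc, Matrix.fromBlocks_multiply, ← Matrix.fromBlocks_one, Matrix.fromBlocks_neg]

theorem Omr_sq (n : ℕ) : Omr n * Omr n = -1 := by
  simp [Omr, Matrix.fromBlocks_multiply, ← Matrix.fromBlocks_one, Matrix.fromBlocks_neg]

theorem Omc_T (n : ℕ) : (Omc n)ᵀ = -Omc n := by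
  simp [Omc, Matrix.fromBlocks_transpose, Matrix.fromBlocks_neg]

theorem Omc_H (n : ℕ) : (Omc n)ᴴ = -Omc n := by
  simp [Omc, Matrix.fromBlocks_conjTranspose, Matrix.fromBlocks_neg]

theorem Omr_T (n : ℕ) : (Omr n)ᵀ = -Omr n := by
  simp [Omr, Matrix.fromBlocks_transpose, Matrix.fromBlocks_neg]

theorem Omc_mm (n : ℕ) {l : Type*} (M : Matrix (Fin n ⊕ Fin n) l ℂ) :
    Omc n * (Omc n * M) = -M := by
  rw [← Matrix.mul_assoc, Omc_sq]; simp

theorem Omr_mm (n : ℕ) {l : Type*} (M : Matrix (Fin n ⊕ Fin n) l ℝ) :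
    Omr n * (Omr n * M) = -M := by
  rw [← Matrix.mul_assoc, Omr_sq]; simp

theorem imP (n : ℕ) (Z : Matrix (Fin n ⊕ Fin n) (Fin n) ℂ)
    (h1 : Zᵀ * Omc n * Z = 0)
    (h2 : Zᴴ * Omc n * Z = (2 * Complex.I) • (1 : Matrix (Fin n) (Fin n) ℂ)) :
    imMat (Z * Zᴴ) = - Omr n := by
  set Zc := Zᵀᴴ with hZc
  have h3 : Zᴴ * Omc n * Zc = 0 := by
    have := congrArg (fun M => (Mᵀ)ᴴ) h1
    have e : (Zᵀ)ᴴ = (Zᴴ)ᵀ := rfl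
    have e2 : ((Omc n)ᵀ)ᴴ = Omc n := by rw [Omc_T, conjTranspose_neg, Omc_H, neg_neg]
    simpa [Matrix.transpose_mul, Matrix.conjTranspose_mul, Matrix.mul_assoc, e2, Omc_T, Omc_H, hZc] using this
  have h4 : Zᵀ * Omc n * Zc = -((2 * Complex.I) • (1 : Matrix (Fin n) (Fin n) ℂ)) := by
    have := congrArg (fun M => (Mᵀ)) h2
    have e : (Zᵀ)ᴴ = (Zᴴ)ᵀ := rfl
    simp [Matrix.transpose_mul, Matrix.mul_assoc, Omc_T] at this
    rw [hZc, e, ← this, neg_neg, Matrix.mul_assoc]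
  have key : Matrix.fromRows Zᴴ (-Zᵀ) * (Omc n * Matrix.fromCols Z Zc) = (2 * Complex.I) • 1 := by
    rw [Matrix.mul_fromCols, Matrix.fromRows_mul_fromCols, ← Matrix.fromBlocks_one,
      Matrix.fromBlocks_smul]
    simp only [Matrix.neg_mul, ← Matrix.mul_assoc, h1, h2, h3, h4]
    simp
  have key2 : ((2 * Complex.I)⁻¹ • (Matrix.fromRows Zᴴ (-Zᵀ) * Omc n)) * Matrix.fromCols Z Zc = 1 := by
    rw [Matrix.smul_mul, Matrix.mul_assoc, key, smul_smul, inv_mul_cancel₀ (by simp), one_smul]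
  have key3 := mul_eq_one_comm.mp key2
  rw [Matrix.mul_smul, ← Matrix.mul_assoc, Matrix.fromCols_mul_fromRows] at key3
  have key4 : (Z * Zᴴ + Zc * -Zᵀ) = -((2 * Complex.I) • Omc n) := by
    have := congrArg (fun M => (2 * Complex.I) • (M * Omc n)) key3
    simp only [Matrix.smul_mul, smul_smul] at this
    rw [mul_inv_cancel₀ (by simp), Matrix.mul_assoc, Omc_sq] at this
    simp only [one_smul, Matrix.mul_neg, Matrix.mul_one, Matrix.one_mul] at this
    rw [← this]; simp
  rw [← reMat_Om]
  ext i j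
  have := congrArg Complex.im (congrFun (congrFun key4 i) j)
  simp [Matrix.mul_apply, hZc] at this
  simp [imMat, reMat, Matrix.mul_apply]
  simp only [Finset.sum_add_distrib, Finset.sum_neg_distrib] at this ⊢
  have e : ∑ x, (Z i x).im * (Z j x).re = ∑ x, (Z j x).re * (Z i x).im := by
    simp [mul_comm]
  have e' : ∑ x, (Z i x).re * (Z j x).im = ∑ x, (Z j x).im * (Z i x).re := by
    simp [mul_comm]
  linarith

theorem iso_const (n : ℕ) 
    (H S : ℝ → Matrix (Fin n ⊕ Fin n) (Fin n ⊕ Fin n) ℂ)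
    (hHsymm : ∀ t, (H t)ᵀ = H t)
    (hS0 : S 0 = 1)
    (hS : ∀ t, HD S (Omc n * H t * S t) t) (t : ℝ) : (S t)ᵀ * Omc n * S t = Omc n := by
  have h : ∀ t, HD (fun s => (S s)ᵀ * Omc n * S s) 0 t := by
    intro t
    have := ((hS t).transpose.mul (HD.const (Omc n) t)).mul (hS t)
    refine HD.congr this ?_
    simp [Matrix.transpose_mul, hHsymm, Omc_T, Matrix.mul_assoc, Omc_mm]
  ext i j
  have h2 := is_const_of_deriv_eq_zero (fun t => (h t i j).differentiableAt)
    (fun t => by simpa using (h t i j).deriv) t 0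
  simpa [hS0] using h2

theorem main_G (n : ℕ) 
    (H S : ℝ → Matrix (Fin n ⊕ Fin n) (Fin n ⊕ Fin n) ℂ)
    (hHsymm : ∀ t, (H t)ᵀ = H t)
    (hS0 : S 0 = 1)
    (hS : ∀ t, HD S (Omc n * H t * S t) t)
    (Z₀ : Matrix (Fin n ⊕ Fin n) (Fin n) ℂ)
    (hZ₀iso : Z₀ᵀ * Omc n * Z₀ = 0)
    (N : ℝ → Matrix (Fin n) (Fin n) ℂ)
    (hNdiff : ∀ t i j, DifferentiableAt ℝ (fun s => N s i j) t)
    (hNunit : ∀ t, IsUnit (N t))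
    (hZnorm : ∀ t, (S t * Z₀ * N t)ᴴ * Omc n * (S t * Z₀ * N t) =
      (2 * Complex.I) • (1 : Matrix (Fin n) (Fin n) ℂ)) (t : ℝ) :
    HD (fun s => symplMetric n (S s * Z₀ * N s))
      (reMat (H t) * Omr n * symplMetric n (S t * Z₀ * N t)
        - symplMetric n (S t * Z₀ * N t) * Omr n * reMat (H t)
        - imMat (H t)
        - symplMetric n (S t * Z₀ * N t) * Omr n * imMat (H t) * Omr n *
            symplMetric n (S t * Z₀ * N t)) t := by
  have hiso : (S t * Z₀ * N t)ᵀ * Omc n * (S t * Z₀ * N t) = 0 := by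
    have : (S t * Z₀ * N t)ᵀ * Omc n * (S t * Z₀ * N t) =
        (N t)ᵀ * (Z₀ᵀ * ((S t)ᵀ * Omc n * S t) * Z₀) * N t := by
      simp [Matrix.transpose_mul, Matrix.mul_assoc]
    rw [this, iso_const n H S hHsymm hS0 hS, hZ₀iso]; simp
  have hY := imP n _ hiso (hZnorm t)
  obtain ⟨N', hN'⟩ : ∃ N', HD N N' t := ⟨fun i j => deriv (fun s => N s i j) t,
    fun i j => (hNdiff t i j).hasDerivAt⟩
  obtain ⟨A, hA⟩ : ∃ A, N' = N t * A := by
    obtain ⟨u, hu⟩ := hNunit t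
    refine ⟨(↑u⁻¹ : Matrix _ _ ℂ) * N', ?_⟩
    rw [← hu, ← Matrix.mul_assoc, Units.mul_inv, Matrix.one_mul]
  have hZ : HD (fun s => S s * Z₀ * N s)
      (Omc n * H t * (S t * Z₀ * N t) + (S t * Z₀ * N t) * A) t := by
    have := ((hS t).mul (HD.const Z₀ t)).mul hN'
    refine HD.congr this ?_
    simp [hA, Matrix.mul_assoc]
  have hnd := (hZ.conjTranspose.mul (HD.const (Omc n) t)).mul hZ
  simp only [hZnorm] at hnd
  have h0 := hnd.unique (HD.const _ t)
  have hZn := hZnorm t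
  have hP := (((HD.const (Omr n)ᵀ t).mul (hZ.mul hZ.conjTranspose).re).mul (HD.const (Omr n) t))
  generalize hZt : S t * Z₀ * N t = Z at *
  have hHc : H t - (H t)ᴴ = (2 * Complex.I) • (imMat (H t)).map Complex.ofReal := by
    ext i j
    have e : H t j i = H t i j := congrFun (congrFun (hHsymm t) i) j
    apply Complex.ext <;> simp [imMat, e]
    ring
  have hAA : A + Aᴴ = Zᴴ * (imMat (H t)).map Complex.ofReal * Z := by
    have e2 : (2 * Complex.I) • (A + Aᴴ) = Zᴴ * (H t - (H t)ᴴ) * Z := by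
      have e3 : Zᴴ * (Omc n * (Z * A)) = (2 * Complex.I) • A := by
        rw [← Matrix.mul_assoc, ← Matrix.mul_assoc, hZn]; simp
      have e4 : Zᴴ * (Omc n * Z) = (2 * Complex.I) • 1 := by
        rw [← Matrix.mul_assoc, hZn]
      simp [Matrix.conjTranspose_mul, Omc_H, Matrix.mul_assoc, Omc_mm, Matrix.add_mul,
        Matrix.mul_add, e3, e4] at h0
      rw [Matrix.mul_sub, Matrix.sub_mul, smul_add, ← sub_eq_zero, ← h0]
      simp only [Matrix.mul_assoc]
      abel
    rw [hHc, Matrix.mul_smul, Matrix.smul_mul] at e2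
    exact smul_right_injective _ (r := 2 * Complex.I) (by simp) e2
  have hP' : (Omc n * H t * Z + Z * A) * Zᴴ + Z * (Omc n * H t * Z + Z * A)ᴴ =
      Omc n * H t * (Z * Zᴴ) - (Z * Zᴴ) * (H t)ᴴ * Omc n
        + (Z * Zᴴ) * (imMat (H t)).map Complex.ofReal * (Z * Zᴴ) := by
    have : (Z * Zᴴ) * (imMat (H t)).map Complex.ofReal * (Z * Zᴴ) = Z * (A + Aᴴ) * Zᴴ := by
      rw [hAA]; simp only [Matrix.mul_assoc]
    rw [this]
    simp only [Matrix.conjTranspose_mul, Matrix.conjTranspose_add, Matrix.mul_add, Matrix.add_mul,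
      Omc_H, Matrix.mul_assoc, Matrix.mul_neg, Matrix.neg_mul]
    abel
  have r1 : reMat (H t)ᴴ = reMat (H t) := by
    ext i j
    have e : H t j i = H t i j := congrFun (congrFun (hHsymm t) i) j
    simp [reMat, e]
  have r2 : imMat (H t)ᴴ = -imMat (H t) := by
    ext i j
    have e : H t j i = H t i j := congrFun (congrFun (hHsymm t) i) j
    simp [imMat, e]
  have r3 : reMat ((imMat (H t)).map Complex.ofReal) = imMat (H t) := by
    ext i j; simp [reMat]
  have r4 : imMat ((imMat (H t)).map Complex.ofReal) = 0 := by
    ext i j; simp [imMat]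
  unfold symplMetric
  refine HD.congr hP ?_
  rw [hP']
  generalize Z * Zᴴ = P at *
  simp only [reMat_mul, imMat_mul, reMat_add, reMat_sub, reMat_Om, imMat_Om, r1, r2, r3, r4, hY,
    Omr_T]
  simp only [Matrix.mul_add, Matrix.add_mul, Matrix.mul_sub, Matrix.sub_mul, Matrix.mul_neg,
    Matrix.neg_mul, Matrix.mul_assoc, Omr_mm, Omr_sq, Matrix.zero_mul, Matrix.mul_zero, neg_neg,
    Matrix.mul_one]
  abel

theorem stmt13 (n : ℕ) (hn : 1 ≤ n)
    (H : ℝ → Matrix (Fin n ⊕ Fin n) (Fin n ⊕ Fin n) ℂ)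
    (hHcont : ∀ i j, Continuous fun t => H t i j)
    (hHsymm : ∀ t, (H t)ᵀ = H t)
    (S : ℝ → Matrix (Fin n ⊕ Fin n) (Fin n ⊕ Fin n) ℂ)
    (hS0 : S 0 = 1)
    (hSderiv : ∀ t i j, HasDerivAt (fun s => S s i j) ((Omc n * H t * S t) i j) t)
    (Z₀ : Matrix (Fin n ⊕ Fin n) (Fin n) ℂ)
    (hZ₀iso : Z₀ᵀ * Omc n * Z₀ = 0)
    (hZ₀norm : Z₀ᴴ * Omc n * Z₀ = (2 * Complex.I) • (1 : Matrix (Fin n) (Fin n) ℂ))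
    (N : ℝ → Matrix (Fin n) (Fin n) ℂ)
    (hNdiff : ∀ t i j, DifferentiableAt ℝ (fun s => N s i j) t)
    (hNunit : ∀ t, IsUnit (N t))
    (hZnorm : ∀ t, (S t * Z₀ * N t)ᴴ * Omc n * (S t * Z₀ * N t) =
      (2 * Complex.I) • (1 : Matrix (Fin n) (Fin n) ℂ)) :
    -- let G(t) and J(t) be the symplectic metric and complex structure of Z(t) = S(t)Z₀N(t)
    (∀ t i j, HasDerivAt (fun s => symplMetric n (S s * Z₀ * N s) i j)
      ((reMat (H t) * Omr n * symplMetric n (S t * Z₀ * N t)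
        - symplMetric n (S t * Z₀ * N t) * Omr n * reMat (H t)
        - imMat (H t)
        - symplMetric n (S t * Z₀ * N t) * Omr n * imMat (H t) * Omr n *
            symplMetric n (S t * Z₀ * N t)) i j) t) ∧
    (∀ t i j, HasDerivAt (fun s => (-(Omr n * symplMetric n (S s * Z₀ * N s))) i j)
      ((Omr n * reMat (H t) * (-(Omr n * symplMetric n (S t * Z₀ * N t)))
        - (-(Omr n * symplMetric n (S t * Z₀ * N t))) * Omr n * reMat (H t)
        + Omr n * imMat (H t)
        + (-(Omr n * symplMetric n (S t * Z₀ * N t))) * Omr n * imMat (H t) *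
            (-(Omr n * symplMetric n (S t * Z₀ * N t)))) i j) t) := by
  have hG := main_G n H S hHsymm hS0 hSderiv Z₀ hZ₀iso N hNdiff hNunit hZnorm
  refine ⟨fun t i j => hG t i j, fun t i j => ?_⟩
  have h := (HD.const (-Omr n) t).mul (hG t)
  simp only [Matrix.neg_mul (Omr n)] at h
  refine HD.congr h ?_ i j
  simp only [Matrix.mul_add, Matrix.add_mul, Matrix.mul_sub, Matrix.sub_mul, Matrix.mul_neg,
    Matrix.neg_mul, Matrix.mul_assoc, Matrix.zero_mul, neg_neg]
  abel
end
end

section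
/- Let n ≥ 1, let Z₀ ∈ ℂ^{2n×n} be a normalised Lagrangian frame, let S ∈ ℂ^{2n×2n} be complex symplectic (SᵀΩS = Ω), and let N ∈ ℂ^{n×n} be Hermitian and positive definite such that Z := S·Z₀·N is normalised (Z*ΩZ = 2i·Iₙ). Assume h(l, l) > 0 for every nonzero l ∈ range Z, and set G := Ωᵀ·Re(ZZ*)·Ω, C := (i/2)·Z*·Ωᵀ·S̄·Z₀ and D := (i/2)·Z*·Ωᵀ·S·Z̄₀. Then: (i) C = N; (ii) M := Dᵀ·C̄ = (1/4)·(S·Z̄₀)ᵀ·G·(S·Z̄₀); (iii) M is symmetric (M = Mᵀ). -/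
open Matrix
open scoped ComplexOrder

noncomputable section

/-- The Hermitian form `h(z, z') = (i/2) ⬝ z̄ · (Ωᵀ z')` on `ℂ^{2n}`. -/
def hformN (n : ℕ) (z z' : Fin n ⊕ Fin n → ℂ) : ℂ :=
  (Complex.I / 2) * (star z ⬝ᵥ ((Omc n)ᵀ *ᵥ z'))

theorem aux_map {m k : Type*} (M : Matrix m k ℂ) : M.map (starRingEnd ℂ) = Mᴴᵀ := by
  ext i j; simp

theorem aux_TH {m k : Type*} (M : Matrix m k ℂ) : Mᵀᴴᵀ = Mᴴ := by
  ext i j; simp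

theorem aux_OmT (n : ℕ) : (Omc n)ᵀ = - Omc n := by
  simp [Omc, Matrix.fromBlocks_transpose, Matrix.fromBlocks_neg]

theorem aux_OmH (n : ℕ) : (Omc n)ᴴ = - Omc n := by
  simp [Omc, Matrix.fromBlocks_conjTranspose, Matrix.fromBlocks_neg]

theorem aux_Omr (n : ℕ) : (Omr n).map Complex.ofReal = Omc n := by
  ext i j
  rcases i with i | i <;> rcases j with j | j <;> simp [Omr, Omc, Matrix.one_apply] <;>
    split_ifs <;> simp

theorem aux_re {m k : Type*} (M : Matrix m k ℂ) :
    (reMat M).map Complex.ofReal = (2 : ℂ)⁻¹ • (M + Mᴴᵀ) := by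
  ext i j
  simp [reMat, Complex.re_eq_add_conj]
  ring

theorem aux_G (n : ℕ) (M : Matrix (Fin n ⊕ Fin n) (Fin n ⊕ Fin n) ℂ) :
    ((Omr n)ᵀ * reMat M * Omr n).map Complex.ofReal
      = (2 : ℂ)⁻¹ • (-(Omc n * (M + Mᴴᵀ) * Omc n)) := by
  have h : ∀ A B : Matrix (Fin n ⊕ Fin n) (Fin n ⊕ Fin n) ℝ,
      (A * B).map Complex.ofReal = A.map Complex.ofReal * B.map Complex.ofReal := by
    intro A B
    exact Matrix.map_mul (f := Complex.ofRealHom)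
  rw [h, h, aux_re, aux_Omr, Matrix.transpose_map, aux_Omr, aux_OmT]
  simp only [Matrix.mul_smul, Matrix.smul_mul, Matrix.neg_mul, smul_neg]

/-- Completeness relation for a normalised Lagrangian frame. -/
theorem aux_complete (n : ℕ) (Z : Matrix (Fin n ⊕ Fin n) (Fin n) ℂ)
    (h0 : Zᵀ * Omc n * Z = 0)
    (h1 : Zᴴ * Omc n * Z = (2 * Complex.I) • (1 : Matrix (Fin n) (Fin n) ℂ)) :
    Z * (Zᴴ * Omc n) - Zᴴᵀ * (Zᵀ * Omc n) = (2 * Complex.I) • 1 := by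
  have h0' : Zᴴ * Omc n * Zᴴᵀ = 0 := by
    have := congrArg (fun M => Mᴴᵀ) h0
    simpa [Matrix.mul_assoc, aux_OmH, aux_OmT, aux_TH] using this
  have h1' : Zᵀ * Omc n * Zᴴᵀ = -((2 * Complex.I) • (1 : Matrix (Fin n) (Fin n) ℂ)) := by
    have := congrArg (fun M => Mᵀ) h1
    simpa [Matrix.mul_assoc, aux_OmT, neg_eq_iff_eq_neg] using this
  have hp : Matrix.fromRows (Zᴴ * Omc n) (-(Zᵀ * Omc n)) * Matrix.fromCols Z Zᴴᵀ
      = (2 * Complex.I) • 1 := by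
    rw [Matrix.fromRows_mul_fromCols, Matrix.neg_mul, Matrix.neg_mul, h0, h1, h0', h1',
      ← Matrix.fromBlocks_one, Matrix.fromBlocks_smul]
    simp
  have hI : (2 * Complex.I) ≠ 0 := by simp
  have hq : ((2 * Complex.I)⁻¹ • Matrix.fromRows (Zᴴ * Omc n) (-(Zᵀ * Omc n)))
      * Matrix.fromCols Z Zᴴᵀ = 1 := by
    rw [Matrix.smul_mul, hp, smul_smul, inv_mul_cancel₀ hI, one_smul]
  have hr := _root_.mul_eq_one_comm.mp hq
  rw [Matrix.mul_smul, Matrix.fromCols_mul_fromRows] at hr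
  rw [← hr, smul_smul, mul_inv_cancel₀ hI, one_smul, Matrix.mul_neg, sub_eq_add_neg]

theorem stmt15 (n : ℕ) (hn : 1 ≤ n)
    (Z₀ : Matrix (Fin n ⊕ Fin n) (Fin n) ℂ)
    (S : Matrix (Fin n ⊕ Fin n) (Fin n ⊕ Fin n) ℂ)
    (N : Matrix (Fin n) (Fin n) ℂ)
    (hZ₀iso : Z₀ᵀ * Omc n * Z₀ = 0)
    (hZ₀norm : Z₀ᴴ * Omc n * Z₀ = (2 * Complex.I) • (1 : Matrix (Fin n) (Fin n) ℂ))
    (hS : Sᵀ * Omc n * S = Omc n)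
    (hN : N.PosDef)
    (hZnorm : (S * Z₀ * N)ᴴ * Omc n * (S * Z₀ * N) =
      (2 * Complex.I) • (1 : Matrix (Fin n) (Fin n) ℂ))
    (hposL : ∀ c : Fin n → ℂ, (S * Z₀ * N).mulVec c ≠ 0 →
      0 < (hformN n ((S * Z₀ * N).mulVec c) ((S * Z₀ * N).mulVec c)).re ∧
        (hformN n ((S * Z₀ * N).mulVec c) ((S * Z₀ * N).mulVec c)).im = 0) :
    let Z := S * Z₀ * N
    let G := ((Omr n)ᵀ * reMat (Z * Zᴴ) * Omr n).map Complex.ofReal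
    let C := (Complex.I / 2) • (Zᴴ * (Omc n)ᵀ * S.map (starRingEnd ℂ) * Z₀)
    let D := (Complex.I / 2) • (Zᴴ * (Omc n)ᵀ * S * Z₀.map (starRingEnd ℂ))
    -- (i) C = N
    (C = N) ∧
    -- (ii) M = Dᵀ C̄ = (1/4) (S Z̄₀)ᵀ G (S Z̄₀)
    (Dᵀ * C.map (starRingEnd ℂ) =
      ((4 : ℂ)⁻¹) • ((S * Z₀.map (starRingEnd ℂ))ᵀ * G * (S * Z₀.map (starRingEnd ℂ)))) ∧
    -- (iii) M is symmetric
    ((Dᵀ * C.map (starRingEnd ℂ))ᵀ = Dᵀ * C.map (starRingEnd ℂ)) := by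
  intro Z G C D
  have hNH : Nᴴ = N := hN.1
  have hSbar : Sᴴ * Omc n * Sᴴᵀ = Omc n := by
    have := congrArg (fun M => Mᴴᵀ) hS
    simpa [Matrix.mul_assoc, aux_OmH, aux_OmT, aux_TH] using this
  have hC : C = N := by
    have e : Zᴴ * (Omc n)ᵀ * S.map (starRingEnd ℂ) * Z₀
        = -(Nᴴ * (Z₀ᴴ * (Sᴴ * Omc n * Sᴴᵀ) * Z₀)) := by
      simp only [Z, aux_map, aux_OmT, Matrix.conjTranspose_mul, Matrix.mul_assoc,
        Matrix.neg_mul, Matrix.mul_neg]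
    show (Complex.I / 2) • (Zᴴ * (Omc n)ᵀ * S.map (starRingEnd ℂ) * Z₀) = N
    rw [e, hSbar, hZ₀norm, hNH, Matrix.mul_smul, Matrix.mul_one, smul_neg, smul_smul, ← neg_smul]
    have : -(Complex.I / 2 * (2 * Complex.I)) = 1 := by
      linear_combination -Complex.I_mul_I
    rw [this, one_smul]
  set W := S * Z₀.map (starRingEnd ℂ) with hW
  have hZiso : Zᵀ * Omc n * Z = 0 := by
    have e : Zᵀ * Omc n * Z = Nᵀ * (Z₀ᵀ * (Sᵀ * Omc n * S) * Z₀) * N := by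
      simp only [Z, Matrix.transpose_mul, Matrix.mul_assoc]
    rw [e, hS, hZ₀iso]; simp
  have hcomp := aux_complete n Z hZiso hZnorm
  have hWW : Wᵀ * Omc n * W = 0 := by
    have e : Wᵀ * Omc n * W = Z₀ᴴ * (Sᵀ * Omc n * S) * Z₀ᴴᵀ := by
      simp only [hW, aux_map, Matrix.transpose_mul, Matrix.transpose_transpose, Matrix.mul_assoc]
    rw [e, hS]
    have := congrArg (fun M => Mᴴᵀ) hZ₀iso
    simpa [Matrix.mul_assoc, aux_OmH, aux_OmT, aux_TH] using this
  have hF : Zᵀ * Omc n * W = -((2 * Complex.I) • Nᵀ) := by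
    have e : Zᵀ * Omc n * W = Nᵀ * (Z₀ᵀ * (Sᵀ * Omc n * S) * Z₀ᴴᵀ) := by
      simp only [Z, hW, aux_map, Matrix.transpose_mul, Matrix.mul_assoc]
    have h1' : Z₀ᵀ * Omc n * Z₀ᴴᵀ = -((2 * Complex.I) • (1 : Matrix (Fin n) (Fin n) ℂ)) := by
      have := congrArg (fun M => Mᵀ) hZ₀norm
      simpa [Matrix.mul_assoc, aux_OmT, neg_eq_iff_eq_neg] using this
    rw [e, hS, h1']; simp
  set E := Zᴴ * Omc n * W with hE
  set F := Zᵀ * Omc n * W with hFd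
  have hET : Eᵀ = -(Wᵀ * Omc n * Zᴴᵀ) := by
    simp [hE, Matrix.transpose_mul, aux_OmT, Matrix.mul_assoc]
  have hFT : Fᵀ = -(Wᵀ * Omc n * Z) := by
    simp [hFd, Matrix.transpose_mul, aux_OmT, Matrix.mul_assoc]
  have hsym : Fᵀ * E = Eᵀ * F := by
    have e : Wᵀ * Omc n * (Z * (Zᴴ * Omc n) - Zᴴᵀ * (Zᵀ * Omc n)) * W
        = -(Fᵀ * E) + Eᵀ * F := by
      rw [hFT, hET, hE, hFd]
      simp only [Matrix.mul_sub, Matrix.sub_mul, Matrix.neg_mul, neg_neg, Matrix.mul_assoc]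
      abel
    rw [hcomp, Matrix.mul_smul, Matrix.mul_one, Matrix.smul_mul, hWW, smul_zero] at e
    exact (neg_add_eq_zero.mp e.symm)
  have hG : Wᵀ * G * W = Eᵀ * F := by
    have e : Wᵀ * G * W = (2 : ℂ)⁻¹ • (Fᵀ * E + Eᵀ * F) := by
      show Wᵀ * ((Omr n)ᵀ * reMat (Z * Zᴴ) * Omr n).map Complex.ofReal * W = _
      rw [aux_G, hFT, hET, hE, hFd]
      simp only [Matrix.conjTranspose_mul, Matrix.conjTranspose_conjTranspose,
        Matrix.transpose_mul, Matrix.mul_smul, Matrix.smul_mul, Matrix.mul_add, Matrix.add_mul,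
        Matrix.neg_mul, Matrix.mul_neg, Matrix.mul_assoc, neg_add]
    rw [e, hsym, ← two_smul ℂ (Eᵀ * F), smul_smul]
    norm_num
  have hD : Dᵀ = -((Complex.I / 2) • Eᵀ) := by
    have : D = -((Complex.I / 2) • E) := by
      simp only [D, hE, hW, aux_OmT, Matrix.mul_assoc, Matrix.neg_mul, Matrix.mul_neg, smul_neg]
    rw [this]; simp
  have hM : Dᵀ * C.map (starRingEnd ℂ) = (4 : ℂ)⁻¹ • (Eᵀ * F) := by
    rw [hC, aux_map, hNH, hD, hF]
    simp only [Matrix.neg_mul, Matrix.mul_neg, Matrix.smul_mul, Matrix.mul_smul, smul_neg,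
      smul_smul, ← neg_smul]
    congr 1
    ring
  refine ⟨hC, ?_, ?_⟩
  · rw [hM, hG]
  · rw [hM, Matrix.transpose_smul, Matrix.transpose_mul, Matrix.transpose_transpose, hsym]
end
end
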